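/- arXiv:2109.14177 — 2 statements merged into one kernel-verified Lean document; each statement's English description precedes it below -/
import Mathlib

section
/- There exists an absolute constant c > 0 such that the following holds. Let a₁ > 0, let f₁, f₂ : [a₁, ∞) → ℝ be continuous, strictly increasing, strictly convex functions, and let (h₁, h₁', h₂, h₂') with 0 < h₁ < h₁' and 0 < h₂ < h₂' be W-good for (f₁, f₂) for some positive integer W. Let A = {a₁ < a₂ < … < a_N} be a finite set of N ≥ 2 positive reals satisfying min{a_{i+1} − a_i : 1 ≤ i ≤ N−1} ≥ max{h₁' − h₁, h₂' − h₂}. Then |2f₁(A+h₁) − 2f₁(A+h₁) + 2f₁(A+h₁') − f₁(A+h₁')| · |2f₂(A+h₂) − 2f₂(A+h₂) + 2f₂(A+h₂') − f₂(A+h₂')| ≥ c · N⁵ / (W log N)³. -/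
open Finset Pointwise

/-!
The proof is a double squeezing argument. Write `gᵢ(t) = fᵢ(t + hᵢ') - fᵢ(t + hᵢ)`; by convexity and
monotonicity of `fᵢ` the function `gᵢ` is positive and strictly increasing.

Outer squeezing (`squeeze_card`): if `U ⊆ A` and `T` consists of elements of `2gᵢ(A) - gᵢ(A)` lying
in `(0, M]` with `M ≤ gᵢ(x)` for all `x ∈ U`, then the sums `fᵢ(x + hᵢ) + s` with `x ∈ U`, `s ∈ T`
are pairwise distinct: by the separation of `A`, `fᵢ(x + hᵢ) + gᵢ(x) = fᵢ(x + hᵢ') ≤ fᵢ(y + hᵢ)` for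
`x < y` in `A`. All these sums lie in the set whose size is to be bounded.

Splitting `A` at its median and using the pigeonhole principle, `U` is the upper half of `A`, and
`n ≥ N / (2W)` points `t` of the lower half lie in one interval on which `g₂ = φ ∘ g₁` with `φ`
strictly convex or concave.

Inner squeezing (`sum_gapRank_le`): for an increasing sequence `x`, adding to `x j` all gap lengths
of the sequence that do not exceed the `j`-th gap yields distinct elements of `2X - X`, so `2X - X`
has at least `∑ j, r j` elements, where `r j` is the rank of the `j`-th gap length.
By strict convexity of `φ`, the pairs (gap of `g₁`, gap of `g₂`) are distinct for distinct `j`, hence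
so are the pairs of ranks, and a Markov-type count (`cube_le_sum_gapRank_mul`) shows that the product
of the two rank sums is at least `(n - 1)³ / 27`. Altogether the product is `≫ N² (N / W)³`; since
`log N ≥ 1/2`, this is stronger than the claim.
-/

/-- For `f : ℝ → ℝ`, `h : ℝ` and a finite set `A ⊆ ℝ`, the set `f(A + h) = {f (x + h) : x ∈ A}`. -/
noncomputable def fShift (f : ℝ → ℝ) (h : ℝ) (A : Finset ℝ) : Finset ℝ := A.image fun x => f (x + h)

/-- The quadruple `(h₁, h₁', h₂, h₂')` is `W`-good for `(f₁, f₂)` on `[u, ∞)`: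
`h₁' > h₁ > 0`, `h₂' > h₂ > 0`, and there is a partition of `[u, ∞)` into `W` intervals
such that on each interval the curve
`t ↦ (f₁(t+h₁') - f₁(t+h₁), f₂(t+h₂') - f₂(t+h₂))`
is the graph of a strictly convex or strictly concave function. -/
noncomputable def WGood (u : ℝ) (f₁ f₂ : ℝ → ℝ) (W : ℕ) (h₁ h₁' h₂ h₂' : ℝ) : Prop :=
  0 < h₁ ∧ h₁ < h₁' ∧ 0 < h₂ ∧ h₂ < h₂' ∧
    ∃ I : Fin W → Set ℝ,
      (∀ w, (I w).OrdConnected) ∧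
      (Pairwise fun w w' => Disjoint (I w) (I w')) ∧
      (⋃ w, I w) = Set.Ici u ∧
      ∀ w, ∃ φ : ℝ → ℝ,
        (StrictConvexOn ℝ ((fun t => f₁ (t + h₁') - f₁ (t + h₁)) '' I w) φ ∨
          StrictConcaveOn ℝ ((fun t => f₁ (t + h₁') - f₁ (t + h₁)) '' I w) φ) ∧
        ∀ t ∈ I w, φ (f₁ (t + h₁') - f₁ (t + h₁)) = f₂ (t + h₂') - f₂ (t + h₂)

/-! ### Secants of strictly convex functions -/

/-- Among chords of equal horizontal length of a strictly convex function, the increment is larger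
for the chord further to the right; the two chords may overlap. -/
lemma StrictConvexOn.increment_lt {K : Set ℝ} {φ : ℝ → ℝ} (hφ : StrictConvexOn ℝ K φ)
    {p q r s : ℝ} (hp : p ∈ K) (hq : q ∈ K) (hr : r ∈ K) (hs : s ∈ K)
    (hpq : p < q) (hpr : p < r) (hlen : q - p = s - r) : φ q - φ p < φ s - φ r := by
  have h1 := hφ.secant_strict_mono hp hq hs hpq.ne' (by linarith) (by linarith)
  have h2 := hφ.secant_strict_mono hs hp hr (by linarith) (by linarith) hpr
  have h3 : (φ p - φ s) / (p - s) = (φ s - φ p) / (s - p) := by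
    rw [← neg_sub (φ s), ← neg_sub s, neg_div_neg_eq]
  have h4 : (φ r - φ s) / (r - s) = (φ s - φ r) / (s - r) := by
    rw [← neg_sub (φ s), ← neg_sub s, neg_div_neg_eq]
  rw [h3, h4] at h2
  have h5 := h1.trans h2
  rw [hlen] at h5
  exact (div_lt_div_iff_of_pos_right (by linarith)).1 h5

lemma shiftDiff_strictMonoOn {u : ℝ} {f : ℝ → ℝ} {h h' : ℝ} (hf : StrictConvexOn ℝ (Set.Ici u) f)
    (h0 : 0 < h) (hh : h < h') :
    StrictMonoOn (fun t => f (t + h') - f (t + h)) (Set.Ici u) := by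
  intro t ht t' ht' htt
  simp only [Set.mem_Ici] at ht ht'
  exact hf.increment_lt (p := t + h) (q := t + h') (r := t' + h) (s := t' + h')
    (by simp only [Set.mem_Ici]; linarith) (by simp only [Set.mem_Ici]; linarith)
    (by simp only [Set.mem_Ici]; linarith) (by simp only [Set.mem_Ici]; linarith)
    (by linarith) (by linarith) (by ring)

/-! ### Squeezing by gap ranks -/

/-- The rank of `d j` among the distinct values of `d`, counted from `1`. -/
noncomputable def gapRank {m : ℕ} (d : Fin m → ℝ) (j : Fin m) : ℕ :=
  #{v ∈ univ.image d | v ≤ d j}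

lemma gapRank_pos {m : ℕ} (d : Fin m → ℝ) (j : Fin m) : 1 ≤ gapRank d j :=
  Finset.card_pos.2 ⟨d j, by simp⟩

lemma gapRank_lt {m : ℕ} {d : Fin m → ℝ} {i j : Fin m} (h : d i < d j) :
    gapRank d i < gapRank d j := by
  refine Finset.card_lt_card ?_
  rw [Finset.ssubset_iff_of_subset]
  · exact ⟨d j, by simp, by simp [h]⟩
  · intro v hv
    simp only [Finset.mem_filter] at hv ⊢
    exact ⟨hv.1, hv.2.trans h.le⟩

lemma eq_of_gapRank_eq {m : ℕ} {d : Fin m → ℝ} {i j : Fin m} (h : gapRank d i = gapRank d j) :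
    d i = d j := by
  rcases lt_trichotomy (d i) (d j) with h1 | h1 | h1
  · exact absurd h (gapRank_lt h1).ne
  · exact h1
  · exact absurd h (gapRank_lt h1).ne'

/-- Markov's inequality: at most a third of the values of `r` exceed three times the average. -/
lemma three_mul_card_large_le {m : ℕ} (r : Fin m → ℕ) (hr : ∀ j, 1 ≤ r j) :
    3 * #{j | 3 * ∑ i, r i < m * r j} ≤ m := by
  rcases Nat.eq_zero_or_pos m with rfl | hm
  · simp
  have hR : 0 < ∑ i, r i :=
    Finset.sum_pos (fun j _ => hr j) ⟨⟨0, hm⟩, Finset.mem_univ _⟩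
  have h1 : #{j | 3 * ∑ i, r i < m * r j} • (3 * ∑ i, r i) ≤
      ∑ j ∈ {j | 3 * ∑ i, r i < m * r j}, m * r j :=
    Finset.card_nsmul_le_sum _ _ _ (fun j hj => (Finset.mem_filter.1 hj).2.le)
  have h2 : ∑ j ∈ {j | 3 * ∑ i, r i < m * r j}, m * r j ≤ m * ∑ j, r j :=
    (Finset.sum_le_sum_of_subset (Finset.filter_subset _ _)).trans_eq (Finset.mul_sum _ _ _).symm
  rw [smul_eq_mul] at h1
  refine Nat.le_of_mul_le_mul_right ?_ hR
  linarith

/-- If the pairs `(d j, e j)` are distinct, the rank sums of `d` and `e` cannot both be small: at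
least a third of the indices have both ranks at most three times the respective average, and the
number of such indices is at most the number of available pairs of ranks. -/
lemma cube_le_sum_gapRank_mul {m : ℕ} (d e : Fin m → ℝ)
    (hinj : ∀ i j, d i = d j → e i = e j → i = j) :
    m ^ 3 ≤ 27 * ((∑ j, gapRank d j) * ∑ j, gapRank e j) := by
  rcases Nat.eq_zero_or_pos m with rfl | hm
  · simp
  set R := ∑ j, gapRank d j with hR
  set S := ∑ j, gapRank e j with hS
  have hd := three_mul_card_large_le (gapRank d) (gapRank_pos d)
  have he := three_mul_card_large_le (gapRank e) (gapRank_pos e)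
  rw [← hR] at hd
  rw [← hS] at he
  set good : Finset (Fin m) := {j | m * gapRank d j ≤ 3 * R ∧ m * gapRank e j ≤ 3 * S} with hgood
  have hcover : m ≤ #good + (#{j | 3 * R < m * gapRank d j} + #{j | 3 * S < m * gapRank e j}) := by
    calc m = #(univ : Finset (Fin m)) := by simp
      _ ≤ #(good ∪ (({j | 3 * R < m * gapRank d j} : Finset (Fin m)) ∪
            ({j | 3 * S < m * gapRank e j} : Finset (Fin m)))) := by
          refine Finset.card_le_card fun j _ => ?_
          simp only [hgood, Finset.mem_union, Finset.mem_filter, Finset.mem_univ, true_and]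
          omega
      _ ≤ _ := (Finset.card_union_le _ _).trans
          (Nat.add_le_add_left (Finset.card_union_le _ _) _)
  have hgc : #good ≤ (3 * R / m) * (3 * S / m) := by
    have : #good ≤ #(Finset.Icc 1 (3 * R / m) ×ˢ Finset.Icc 1 (3 * S / m)) := by
      refine Finset.card_le_card_of_injOn (fun j => (gapRank d j, gapRank e j)) ?_ ?_
      · intro j hj
        have hj' := (Finset.mem_filter.1 (Finset.mem_coe.1 hj)).2
        simp only [Finset.coe_product, Set.mem_prod, Finset.coe_Icc, Set.mem_Icc]
        refine ⟨⟨gapRank_pos d j, ?_⟩, gapRank_pos e j, ?_⟩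
        · rw [Nat.le_div_iff_mul_le hm, mul_comm]; exact hj'.1
        · rw [Nat.le_div_iff_mul_le hm, mul_comm]; exact hj'.2
      · intro i _ j _ hij
        simp only [Prod.mk.injEq] at hij
        exact hinj i j (eq_of_gapRank_eq hij.1) (eq_of_gapRank_eq hij.2)
    simpa using this
  have hX : m * (3 * R / m) ≤ 3 * R := Nat.mul_div_le _ _
  have hY : m * (3 * S / m) ≤ 3 * S := Nat.mul_div_le _ _
  have hm3 : m ≤ 3 * #good := by omega
  calc m ^ 3 = m ^ 2 * m := by ring
    _ ≤ m ^ 2 * (3 * ((3 * R / m) * (3 * S / m))) := by gcongr; omega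
    _ = 3 * ((m * (3 * R / m)) * (m * (3 * S / m))) := by ring
    _ ≤ 3 * ((3 * R) * (3 * S)) := by gcongr
    _ = 27 * (R * S) := by ring

/-- The part of `2X - X` in `(0, max X]`, for `X` the set of values of an increasing sequence `x`. -/
noncomputable def squeezed {m : ℕ} (x : Fin (m + 1) → ℝ) : Finset ℝ :=
  {s ∈ univ.image x + univ.image x - univ.image x | 0 < s ∧ s ≤ x (Fin.last m)}

/-- The `j`-th gap of a sequence. -/
def gap {m : ℕ} (x : Fin (m + 1) → ℝ) (j : Fin m) : ℝ := x j.succ - x j.castSucc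

lemma mem_squeezed {m : ℕ} {x : Fin (m + 1) → ℝ} {s : ℝ} :
    s ∈ squeezed x ↔ (∃ i j k, x i + x j - x k = s) ∧ 0 < s ∧ s ≤ x (Fin.last m) := by
  simp [squeezed, Finset.mem_add, Finset.mem_sub]

/-- For each `j`, the points `x j + v` with `v` a gap length not exceeding the `j`-th gap lie in
`(x j, x (j + 1)]`; there are `gapRank (gap x) j` of them. -/
lemma sum_gapRank_le {m : ℕ} {x : Fin (m + 1) → ℝ} (hx : StrictMono x) (h0 : 0 < x 0) :
    ∑ j, gapRank (gap x) j ≤ #(squeezed x) := by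
  have hgap : ∀ j, 0 < gap x j := fun j => sub_pos.2 (hx (Fin.castSucc_lt_succ))
  have hpos : ∀ i, 0 < x i := fun i => h0.trans_le (hx.monotone (Fin.zero_le i))
  unfold gapRank
  rw [← Finset.card_sigma]
  refine Finset.card_le_card_of_injOn (fun p => x p.1.castSucc + p.2) ?_ ?_
  · rintro ⟨j, v⟩ hp
    simp only [Finset.coe_sigma, Set.mem_sigma_iff, Finset.mem_coe, Finset.mem_filter,
      Finset.mem_image, Finset.mem_univ, true_and] at hp
    obtain ⟨⟨i, rfl⟩, hv⟩ := hp
    refine Finset.mem_coe.2 (mem_squeezed.2 ⟨⟨j.castSucc, i.succ, i.castSucc, ?_⟩, ?_, ?_⟩)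
    · simp only [gap]; ring
    · have := hgap i
      have := hpos j.castSucc
      simp only; linarith
    · have := hx.monotone (Fin.le_last j.succ)
      simp only [gap] at hv ⊢; linarith
  ·
    -- the intervals `(x i, x (i + 1)]` for different `i` are disjoint
    have key : ∀ (i j : Fin m) (v w : ℝ), i < j → v ≤ gap x i → 0 < w →
        x i.castSucc + v < x j.castSucc + w := by
      intro i j v w hij hv hw
      have : x i.succ ≤ x j.castSucc := hx.monotone (Fin.succ_le_castSucc_iff.2 hij)
      simp only [gap] at hv; linarith
    rintro ⟨i, v⟩ hi ⟨j, w⟩ hj hij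
    simp only [Finset.coe_sigma, Set.mem_sigma_iff, Finset.mem_coe, Finset.mem_filter,
      Finset.mem_image, Finset.mem_univ, true_and] at hi hj hij
    obtain ⟨⟨i', rfl⟩, hv⟩ := hi
    obtain ⟨⟨j', rfl⟩, hw⟩ := hj
    rcases lt_trichotomy i j with h | h | h
    · exact absurd hij (key _ _ _ _ h hv (hgap _)).ne
    · subst h
      have : gap x i' = gap x j' := by linarith
      rw [this]
    · exact absurd hij (key _ _ _ _ h hw (hgap _)).ne'

lemma squeezed_card_pos {m : ℕ} {x : Fin (m + 1) → ℝ} (hx : StrictMono x) (h0 : 0 < x 0) :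
    1 ≤ #(squeezed x) :=
  Finset.card_pos.2 ⟨x 0, mem_squeezed.2
    ⟨⟨0, 0, 0, by ring⟩, h0, hx.monotone (Fin.zero_le _)⟩⟩

/-- Equal gaps of `x` at different places are matched by unequal gaps of its image under a strictly
convex function. -/
lemma gap_pair_injective {m : ℕ} {x y : Fin (m + 1) → ℝ} (hx : StrictMono x)
    {K : Set ℝ} {φ : ℝ → ℝ} (hφ : StrictConvexOn ℝ K φ) (hK : ∀ i, x i ∈ K)
    (hy : ∀ i, φ (x i) = y i) :
    ∀ i j, gap x i = gap x j → gap y i = gap y j → i = j := by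
  have key : ∀ i j, i < j → gap x i = gap x j → gap y i < gap y j := by
    intro i j hij h
    simp only [gap, ← hy]
    exact hφ.increment_lt (hK _) (hK _) (hK _) (hK _) (hx Fin.castSucc_lt_succ)
      (hx (Fin.castSucc_lt_castSucc_iff.2 hij)) h
  intro i j h1 h2
  rcases lt_trichotomy i j with h | h | h
  · exact absurd h2 (key _ _ h h1).ne
  · exact h
  · exact absurd h2 (key _ _ h h1.symm).ne'

lemma gap_pair_injective' {m : ℕ} {x y : Fin (m + 1) → ℝ} (hx : StrictMono x)
    {K : Set ℝ} {φ : ℝ → ℝ} (hφ : StrictConvexOn ℝ K φ ∨ StrictConcaveOn ℝ K φ)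
    (hK : ∀ i, x i ∈ K) (hy : ∀ i, φ (x i) = y i) :
    ∀ i j, gap x i = gap x j → gap y i = gap y j → i = j := by
  rcases hφ with hφ | hφ
  · exact gap_pair_injective hx hφ hK hy
  · intro i j h1 h2
    refine gap_pair_injective (y := fun i => -y i) hx hφ.neg hK (fun i => by simp [hy]) i j h1 ?_
    simp only [gap] at h2 ⊢; linarith

lemma cube_le_squeezed_mul {m : ℕ} {x y : Fin (m + 1) → ℝ} (hx : StrictMono x) (hy : StrictMono y)
    (hx0 : 0 < x 0) (hy0 : 0 < y 0) {K : Set ℝ} {φ : ℝ → ℝ}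
    (hφ : StrictConvexOn ℝ K φ ∨ StrictConcaveOn ℝ K φ) (hK : ∀ i, x i ∈ K)
    (hxy : ∀ i, φ (x i) = y i) :
    (m + 1) ^ 3 ≤ 216 * (#(squeezed x) * #(squeezed y)) := by
  have h1 := cube_le_sum_gapRank_mul _ _ (gap_pair_injective' hx hφ hK hxy)
  have h2 := Nat.mul_le_mul (sum_gapRank_le hx hx0) (sum_gapRank_le hy hy0)
  have h3 := Nat.mul_le_mul (squeezed_card_pos hx hx0) (squeezed_card_pos hy hy0)
  rcases Nat.eq_zero_or_pos m with rfl | hm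
  · omega
  · have h4 : (m + 1) ^ 3 ≤ (2 * m) ^ 3 := Nat.pow_le_pow_left (by omega) 3
    have h5 : (2 * m) ^ 3 = 8 * m ^ 3 := by ring
    omega

/-! ### Squeezing into the shifted set -/

lemma squeeze_card {u : ℝ} {A U : Finset ℝ} {f : ℝ → ℝ} {h h' : ℝ} {m : ℕ} {t : Fin (m + 1) → ℝ}
    (hA : ∀ a ∈ A, u ≤ a) (hU : U ⊆ A) (ht : ∀ i, t i ∈ A) (htU : ∀ a ∈ U, t (Fin.last m) ≤ a)
    (hmono : StrictMonoOn f (Set.Ici u)) (hconv : StrictConvexOn ℝ (Set.Ici u) f)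
    (h0 : 0 < h) (hh : h < h')
    (hsep : ∀ a ∈ A, ∀ b ∈ A, a < b → h' - h ≤ b - a) :
    #U * #(squeezed fun i => f (t i + h') - f (t i + h)) ≤
      #(fShift f h A + fShift f h A - fShift f h A - fShift f h A +
          fShift f h' A + fShift f h' A - fShift f h' A) := by
  have hsh : ∀ a ∈ A, ∀ k, 0 < k → a + k ∈ Set.Ici u := by
    intro a ha k hk
    have := hA a ha
    simp only [Set.mem_Ici]; linarith
  have hmem : ∀ a ∈ A, ∀ k, f (a + k) ∈ fShift f k A := fun a ha k =>
    Finset.mem_image_of_mem _ ha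
  rw [← Finset.card_product]
  refine Finset.card_le_card_of_injOn (fun p => f (p.1 + h) + p.2) ?_ ?_
  · rintro ⟨a, s⟩ hp
    obtain ⟨ha, hs⟩ := Finset.mem_product.1 (Finset.mem_coe.1 hp)
    obtain ⟨⟨i, j, k, rfl⟩, -⟩ := mem_squeezed.1 hs
    have : f (a + h) + (f (t i + h') - f (t i + h) + (f (t j + h') - f (t j + h)) -
          (f (t k + h') - f (t k + h))) =
        f (a + h) + f (t k + h) - f (t i + h) - f (t j + h) + f (t i + h') + f (t j + h') -
          f (t k + h') := by ring
    refine Finset.mem_coe.2 ?_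
    simp only [this]
    exact Finset.sub_mem_sub (Finset.add_mem_add (Finset.add_mem_add (Finset.sub_mem_sub
      (Finset.sub_mem_sub (Finset.add_mem_add (hmem _ (hU ha) _) (hmem _ (ht k) _))
      (hmem _ (ht i) _)) (hmem _ (ht j) _)) (hmem _ (ht i) _)) (hmem _ (ht j) _)) (hmem _ (ht k) _)
  · have key : ∀ a ∈ U, ∀ b ∈ U, ∀ s ∈ squeezed (fun i => f (t i + h') - f (t i + h)),
        ∀ s' ∈ squeezed (fun i => f (t i + h') - f (t i + h)), a < b →
        f (a + h) + s < f (b + h) + s' := by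
      intro a ha b hb s hs s' hs' hab
      have h1 := (mem_squeezed.1 hs).2.2
      have h2 := (mem_squeezed.1 hs').2.1
      have h3 := (shiftDiff_strictMonoOn hconv h0 hh).monotoneOn (Set.mem_Ici.2 (hA _ (ht _)))
        (Set.mem_Ici.2 (hA _ (hU ha))) (htU a ha)
      have h4 := hsep a (hU ha) b (hU hb) hab
      have h5 : f (a + h') ≤ f (b + h) :=
        hmono.monotoneOn (hsh a (hU ha) _ (h0.trans hh)) (hsh b (hU hb) _ h0) (by linarith)
      linarith
    rintro ⟨a, s⟩ hp ⟨b, s'⟩ hq hpq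
    obtain ⟨ha, hs⟩ := Finset.mem_product.1 (Finset.mem_coe.1 hp)
    obtain ⟨hb, hs'⟩ := Finset.mem_product.1 (Finset.mem_coe.1 hq)
    simp only at hpq ha hs hb hs'
    rcases lt_trichotomy a b with hab | hab | hab
    · exact absurd hpq (key _ ha _ hb _ hs _ hs' hab).ne
    · subst hab
      have : s = s' := by linarith
      rw [this]
    · exact absurd hpq (key _ hb _ ha _ hs' _ hs hab).ne'

/-! ### The median and the conclusion -/

lemma exists_median (A : Finset ℝ) (hA : A.Nonempty) :
    ∃ μ : ℝ, #A ≤ 2 * #{a ∈ A | a ≤ μ} ∧ #A ≤ 2 * #{a ∈ A | μ ≤ a} := by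
  have hN := hA.card_pos
  set k : Fin #A := ⟨#A / 2, by omega⟩ with hk
  set o := A.orderEmbOfFin rfl with ho
  refine ⟨o k, ?_, ?_⟩
  · have : #(Finset.Iic k) ≤ #{a ∈ A | a ≤ o k} := by
      refine Finset.card_le_card_of_injOn o ?_ o.injective.injOn
      intro i hi
      simp only [Finset.coe_Iic, Set.mem_Iic] at hi
      simp [hi, ho, Finset.orderEmbOfFin_mem]
    rw [Fin.card_Iic] at this
    simp only [hk] at this ⊢
    omega
  · have : #(Finset.Ici k) ≤ #{a ∈ A | o k ≤ a} := by
      refine Finset.card_le_card_of_injOn o ?_ o.injective.injOn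
      intro i hi
      simp only [Finset.coe_Ici, Set.mem_Ici] at hi
      simp [hi, ho, Finset.orderEmbOfFin_mem]
    rw [Fin.card_Ici] at this
    simp only [hk] at this ⊢
    omega

/-- The bound without logarithms, in natural numbers; the constant is `6912 = 216 * 2² * 2³`. -/
lemma expander_nat (A : Finset ℝ) (hA : A.Nonempty) (f₁ f₂ : ℝ → ℝ) (W : ℕ) (h₁ h₁' h₂ h₂' : ℝ)
    (hm₁ : StrictMonoOn f₁ (Set.Ici (A.min' hA))) (hm₂ : StrictMonoOn f₂ (Set.Ici (A.min' hA)))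
    (hc₁ : StrictConvexOn ℝ (Set.Ici (A.min' hA)) f₁)
    (hc₂ : StrictConvexOn ℝ (Set.Ici (A.min' hA)) f₂)
    (hgood : WGood (A.min' hA) f₁ f₂ W h₁ h₁' h₂ h₂')
    (hsep : ∀ x ∈ A, ∀ y ∈ A, x < y → max (h₁' - h₁) (h₂' - h₂) ≤ y - x) :
    #A ^ 5 ≤ 6912 * W ^ 3 *
      (#(fShift f₁ h₁ A + fShift f₁ h₁ A - fShift f₁ h₁ A - fShift f₁ h₁ A +
          fShift f₁ h₁' A + fShift f₁ h₁' A - fShift f₁ h₁' A) *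
        #(fShift f₂ h₂ A + fShift f₂ h₂ A - fShift f₂ h₂ A - fShift f₂ h₂ A +
          fShift f₂ h₂' A + fShift f₂ h₂' A - fShift f₂ h₂' A)) := by
  classical
  obtain ⟨hh₁, hh₁', hh₂, hh₂', I, -, -, hI, hφ⟩ := hgood
  have hu : ∀ a ∈ A, A.min' hA ≤ a := fun a ha => A.min'_le a ha
  obtain ⟨μ, hL, hU⟩ := exists_median A hA
  set L := {a ∈ A | a ≤ μ} with hLdef
  set U := {a ∈ A | μ ≤ a} with hUdef
  have hN := hA.card_pos
  -- pigeonhole: some `I w` contains at least a proportion `1 / W` of the lower half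
  have hpig : ∃ w, #L ≤ W * #{a ∈ L | a ∈ I w} := by
    by_contra hcon
    push Not at hcon
    have hcov : L = univ.biUnion fun w => {a ∈ L | a ∈ I w} := by
      ext a
      simp only [Finset.mem_biUnion, Finset.mem_univ, true_and, Finset.mem_filter,
        exists_and_left]
      refine ⟨fun ha => ⟨ha, ?_⟩, fun ha => ha.1⟩
      have : a ∈ ⋃ w, I w := by
        rw [hI]; exact hu a (Finset.mem_filter.1 ha).1
      simpa using this
    have h1 : #L ≤ ∑ w, #{a ∈ L | a ∈ I w} := by
      conv_lhs => rw [hcov]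
      exact Finset.card_biUnion_le
    have hW : 0 < W := by
      rcases Nat.eq_zero_or_pos W with rfl | hW
      · have : #L ≤ 0 := by simpa using h1
        omega
      · exact hW
    have h2 : ∑ w : Fin W, W * #{a ∈ L | a ∈ I w} < ∑ w : Fin W, #L :=
      Finset.sum_lt_sum_of_nonempty ⟨⟨0, hW⟩, Finset.mem_univ _⟩ fun w _ => hcon w
    rw [← Finset.mul_sum] at h2
    simp only [Finset.sum_const, Finset.card_univ, Fintype.card_fin, smul_eq_mul] at h2
    have := Nat.lt_of_mul_lt_mul_left h2
    omega
  obtain ⟨w, hw⟩ := hpig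
  obtain ⟨m, hm⟩ : ∃ m, #{a ∈ L | a ∈ I w} = m + 1 := by
    refine Nat.exists_eq_succ_of_ne_zero fun h0 => ?_
    rw [h0] at hw
    omega
  set t := ({a ∈ L | a ∈ I w} : Finset ℝ).orderEmbOfFin hm with ht
  have htmem : ∀ i, (t i ∈ A ∧ t i ≤ μ) ∧ t i ∈ I w := by
    intro i
    have := Finset.orderEmbOfFin_mem _ hm i
    simpa only [hLdef, Finset.mem_filter] using this
  have htA : ∀ i, t i ∈ A := fun i => (htmem i).1.1
  have htU : ∀ a ∈ U, t (Fin.last m) ≤ a := fun a ha =>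
    (htmem _).1.2.trans (Finset.mem_filter.1 ha).2
  have hUA : U ⊆ A := Finset.filter_subset _ _
  obtain ⟨φ, hφ, hφg⟩ := hφ w
  have hx : StrictMono fun i => f₁ (t i + h₁') - f₁ (t i + h₁) := fun i j hij =>
    shiftDiff_strictMonoOn hc₁ hh₁ hh₁' (hu _ (htA i)) (hu _ (htA j)) (t.strictMono hij)
  have hy : StrictMono fun i => f₂ (t i + h₂') - f₂ (t i + h₂) := fun i j hij =>
    shiftDiff_strictMonoOn hc₂ hh₂ hh₂' (hu _ (htA i)) (hu _ (htA j)) (t.strictMono hij)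
  have hpos : ∀ (f : ℝ → ℝ) (h h' : ℝ), StrictMonoOn f (Set.Ici (A.min' hA)) → 0 < h → h < h' →
      0 < f (t 0 + h') - f (t 0 + h) := by
    intro f h h' hf h0 hh
    have := hu _ (htA 0)
    exact sub_pos.2 (hf (by simp only [Set.mem_Ici]; linarith)
      (by simp only [Set.mem_Ici]; linarith) (by linarith))
  have hcube := cube_le_squeezed_mul hx hy (hpos f₁ _ _ hm₁ hh₁ hh₁') (hpos f₂ _ _ hm₂ hh₂ hh₂')
    hφ (fun i => ⟨t i, (htmem i).2, rfl⟩) (fun i => hφg _ (htmem i).2)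
  have hP₁ := squeeze_card hu hUA htA htU hm₁ hc₁ hh₁ hh₁'
    (fun a ha b hb hab => (le_max_left _ _).trans (hsep a ha b hb hab))
  have hP₂ := squeeze_card hu hUA htA htU hm₂ hc₂ hh₂ hh₂'
    (fun a ha b hb hab => (le_max_right _ _).trans (hsep a ha b hb hab))
  rw [hm] at hw
  have hNW : #A ≤ 2 * (W * (m + 1)) := by omega
  set T₁ := #(squeezed fun i => f₁ (t i + h₁') - f₁ (t i + h₁))
  set T₂ := #(squeezed fun i => f₂ (t i + h₂') - f₂ (t i + h₂))
  calc #A ^ 5 = #A ^ 2 * #A ^ 3 := by ring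
    _ ≤ (2 * #U) ^ 2 * (2 * (W * (m + 1))) ^ 3 := by gcongr
    _ = 32 * W ^ 3 * #U ^ 2 * (m + 1) ^ 3 := by ring
    _ ≤ 32 * W ^ 3 * #U ^ 2 * (216 * (T₁ * T₂)) := by gcongr
    _ = 6912 * W ^ 3 * ((#U * T₁) * (#U * T₂)) := by ring
    _ ≤ _ := by gcongr

theorem main_expander :
    ∃ c : ℝ, 0 < c ∧
      ∀ (A : Finset ℝ) (hA : A.Nonempty) (f₁ f₂ : ℝ → ℝ) (W : ℕ) (h₁ h₁' h₂ h₂' : ℝ),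
        2 ≤ A.card → (∀ x ∈ A, 0 < x) → 0 < W →
        ContinuousOn f₁ (Set.Ici (A.min' hA)) →
        ContinuousOn f₂ (Set.Ici (A.min' hA)) →
        StrictMonoOn f₁ (Set.Ici (A.min' hA)) →
        StrictMonoOn f₂ (Set.Ici (A.min' hA)) →
        StrictConvexOn ℝ (Set.Ici (A.min' hA)) f₁ →
        StrictConvexOn ℝ (Set.Ici (A.min' hA)) f₂ →
        WGood (A.min' hA) f₁ f₂ W h₁ h₁' h₂ h₂' →
        (∀ x ∈ A, ∀ y ∈ A, x < y → max (h₁' - h₁) (h₂' - h₂) ≤ y - x) →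
        c * (A.card : ℝ) ^ 5 / ((W : ℝ) * Real.log A.card) ^ 3 ≤
          (((fShift f₁ h₁ A + fShift f₁ h₁ A - fShift f₁ h₁ A - fShift f₁ h₁ A +
              fShift f₁ h₁' A + fShift f₁ h₁' A - fShift f₁ h₁' A).card : ℝ) *
            ((fShift f₂ h₂ A + fShift f₂ h₂ A - fShift f₂ h₂ A - fShift f₂ h₂ A +
              fShift f₂ h₂' A + fShift f₂ h₂' A - fShift f₂ h₂' A).card : ℝ)) := by
  -- `log N ≥ log 2 ≥ 1/2` costs a factor `8`, and `55296 = 8 * 6912`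
  refine ⟨1 / 55296, by norm_num, ?_⟩
  intro A hA f₁ f₂ W h₁ h₁' h₂ h₂' hN _ hW _ _ hm₁ hm₂ hc₁ hc₂ hgood hsep
  have key := expander_nat A hA f₁ f₂ W h₁ h₁' h₂ h₂' hm₁ hm₂ hc₁ hc₂ hgood hsep
  set P₁ := #(fShift f₁ h₁ A + fShift f₁ h₁ A - fShift f₁ h₁ A - fShift f₁ h₁ A +
    fShift f₁ h₁' A + fShift f₁ h₁' A - fShift f₁ h₁' A)
  set P₂ := #(fShift f₂ h₂ A + fShift f₂ h₂ A - fShift f₂ h₂ A - fShift f₂ h₂ A +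
    fShift f₂ h₂' A + fShift f₂ h₂' A - fShift f₂ h₂' A)
  have key' : (#A : ℝ) ^ 5 ≤ 6912 * (W : ℝ) ^ 3 * ((P₁ : ℝ) * P₂) := by exact_mod_cast key
  have hlog : (1 / 2 : ℝ) ≤ Real.log #A := by
    have h1 : Real.log 2 ≤ Real.log #A :=
      Real.log_le_log (by norm_num) (by exact_mod_cast hN)
    have := Real.log_two_gt_d9
    linarith
  have hW' : (0 : ℝ) < W := by exact_mod_cast hW
  have hlog3 : (1 / 8 : ℝ) ≤ Real.log #A ^ 3 := by
    have := pow_le_pow_left₀ (by norm_num) hlog 3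
    norm_num at this ⊢; exact this
  have hP : (0 : ℝ) ≤ (P₁ : ℝ) * P₂ := by positivity
  rw [div_le_iff₀ (by positivity), mul_pow]
  calc 1 / 55296 * (#A : ℝ) ^ 5 ≤ 1 / 55296 * (6912 * (W : ℝ) ^ 3 * ((P₁ : ℝ) * P₂)) := by gcongr
    _ = (P₁ : ℝ) * P₂ * ((W : ℝ) ^ 3 * (1 / 8)) := by ring
    _ ≤ (P₁ : ℝ) * P₂ * ((W : ℝ) ^ 3 * Real.log #A ^ 3) := by gcongr
end

section
/- There exists an absolute constant c > 0 such that for every finite set A ⊂ ℝ with 0 ∉ A and |A| ≥ 2, there exist a, a' ∈ A such that |(aA+1)(a'A+1)| ≥ c · |A|² / log |A|. -/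
/-!
Write `n = |A|`. For `a, a' ∈ A` let `E(a, a')` be the multiplicative energy of the nonzero parts of
`aA + 1` and `a'A + 1`. By Cauchy–Schwarz the product set has at least `(n - 1)⁴ / E(a, a')`
elements, so it is enough to show `∑ E(a, a') ≪ n⁴ log n`, the sum being over all `a, a' ∈ A`.

Put `b = -1/a`, `b' = -1/a'`. A solution of `(ax + 1)(a'y + 1) = (az + 1)(a'w + 1)` with nonzero
factors says exactly that `(b, b')`, `(x, w)`, `(z, y)` lie on a line that is neither vertical nor
horizontal. With `P = A ∪ (-1/A)` the sum of the energies is therefore at most `∑ N(ℓ)³`, where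
`N(ℓ)` is the number of points of the grid `P × P` on `ℓ` and `ℓ` runs over a finite set of
such lines with `N(ℓ) ≥ 2` (`sum_mulEnergy_le`).

The sum of cubes is controlled by the Szemerédi–Trotter bound for grids: at most `81 |P|⁴ / k³`
lines satisfy `N(ℓ) ≥ k` (`card_rich_lines`). To see this, cut `P` into consecutive blocks of about
`8|P|/k` elements, which cuts the grid into cells. A line with nonzero slope is monotone, hence
meets few cells, so a line with at least `k` grid points has at least `k` ordered pairs of distinct
points in a common cell (`le_card_closePairs`). Two points determine the line, and there are few
pairs of points in a common cell. Summing over `k` gives a harmonic sum, which is the source of the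
logarithm (`sum_cubes_le`).
-/

open Finset Pointwise

/-- For `a : ℝ` and a finite set `A ⊆ ℝ`, the set `aA + 1 = {a * x + 1 : x ∈ A}`. -/
noncomputable def pshift (a : ℝ) (A : Finset ℝ) : Finset ℝ := A.image fun x => a * x + 1

/-! ### Blocks and cells -/

/-- The abscissae of the points of the grid `P × P` on the line `y = l.1 * x + l.2`. -/
noncomputable def onLine (P : Finset ℝ) (l : ℝ × ℝ) : Finset ℝ := {x ∈ P | l.1 * x + l.2 ∈ P}

/-- The number of elements of `P` below `x`. -/
noncomputable def rk (P : Finset ℝ) (x : ℝ) : ℕ := #{y ∈ P | y < x}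

/-- The index of the block containing `x` when `P` is cut, in increasing order, into blocks of
`s` consecutive elements. -/
noncomputable def blk (P : Finset ℝ) (s : ℕ) (x : ℝ) : ℕ := rk P x / s

lemma rk_mono (P : Finset ℝ) : Monotone (rk P) := by
  intro x y h
  refine card_le_card fun z hz => ?_
  simp only [mem_filter] at hz ⊢
  exact ⟨hz.1, hz.2.trans_le h⟩

lemma rk_lt {P : Finset ℝ} {x y : ℝ} (hx : x ∈ P) (h : x < y) : rk P x < rk P y := by
  refine card_lt_card ⟨fun z hz => ?_, fun hs => ?_⟩
  · simp only [mem_filter] at hz ⊢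
    exact ⟨hz.1, hz.2.trans h⟩
  · have := hs (mem_filter.2 ⟨hx, h⟩)
    simp at this

lemma rk_injOn (P : Finset ℝ) : Set.InjOn (rk P) P := by
  intro x hx y hy h
  rcases lt_trichotomy x y with h' | h' | h'
  · exact absurd h (rk_lt hx h').ne
  · exact h'
  · exact absurd h (rk_lt hy h').ne'

lemma blk_mono (P : Finset ℝ) (s : ℕ) : Monotone (blk P s) := fun _ _ h =>
  Nat.div_le_div_right (rk_mono P h)

lemma blk_le (P : Finset ℝ) (s : ℕ) (x : ℝ) : blk P s x ≤ #P / s :=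
  Nat.div_le_div_right (card_filter_le _ _)

/-- The ordered pairs of elements of `P` in a common block. -/
noncomputable def blkPairs (P : Finset ℝ) (s : ℕ) : Finset (ℝ × ℝ) :=
  {p ∈ P ×ˢ P | blk P s p.1 = blk P s p.2}

lemma card_blkPairs_le (P : Finset ℝ) {s : ℕ} (hs : 0 < s) : #(blkPairs P s) ≤ #P * s := by
  have h := card_le_mul_card_image_of_maps_to (f := Prod.fst) (s := blkPairs P s) (t := P)
    (fun p hp => (mem_product.1 (mem_filter.1 hp).1).1) s (fun x hx => ?_)
  · rwa [mul_comm] at h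
  · have : #(Finset.Ico (blk P s x * s) (blk P s x * s + s)) = s := by simp
    refine le_of_le_of_eq (card_le_card_of_injOn (fun p => rk P p.2) ?_ ?_) this
    · intro p hp
      simp only [blkPairs, coe_filter, mem_filter, mem_product, Set.mem_ofPred_eq] at hp
      obtain ⟨⟨_, hb⟩, rfl⟩ := hp
      rw [hb]
      simp only [coe_Ico, Set.mem_Ico]
      exact ⟨Nat.div_mul_le_self _ _, by
        have := Nat.lt_div_mul_add (a := rk P p.2) hs
        simpa [blk] using this⟩
    · rintro ⟨p₁, p₂⟩ hp ⟨q₁, q₂⟩ hq h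
      simp only [blkPairs, coe_filter, mem_filter, mem_product, Set.mem_ofPred_eq] at hp hq h
      have := rk_injOn P (mem_coe.2 hp.1.1.2) (mem_coe.2 hq.1.1.2) h
      rw [this, hp.2, hq.2]

/-! ### Rich lines of a grid -/

/-- Cauchy–Schwarz: a map taking few values has many coincidences. -/
lemma sq_card_le_card_coincidences {α : Type*} [DecidableEq α] (S : Finset α) (f : α → ℕ) (q : ℕ)
    (hf : ∀ x ∈ S, f x < q) : #S ^ 2 ≤ q * #{p ∈ S ×ˢ S | f p.1 = f p.2} := by
  have h1 : #S = ∑ b ∈ range q, #{x ∈ S | f x = b} :=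
    card_eq_sum_card_fiberwise fun x hx => by simpa using hf x hx
  have h2 : #{p ∈ S ×ˢ S | f p.1 = f p.2} = ∑ b ∈ range q, #{x ∈ S | f x = b} ^ 2 := by
    rw [card_eq_sum_card_fiberwise (f := fun p => f p.1) (t := range q)]
    · refine sum_congr rfl fun b _ => ?_
      rw [sq, ← card_product]
      congr 1
      ext ⟨x, y⟩
      simp only [mem_filter, mem_product]
      grind
    · intro p hp
      simp only [coe_filter, mem_product, Set.mem_ofPred_eq] at hp
      simpa using hf _ hp.1.1
  rw [h2]
  nth_rewrite 1 [h1]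
  have := sq_sum_le_card_mul_sum_sq (s := range q) (f := fun b => #{x ∈ S | f x = b})
  simpa using this

/-- The ordered pairs of distinct grid points on `l` in a common cell of the block decomposition,
each point being given by its abscissa. -/
noncomputable def closePairs (P : Finset ℝ) (s : ℕ) (l : ℝ × ℝ) : Finset (ℝ × ℝ) :=
  {p ∈ onLine P l ×ˢ onLine P l | p.1 ≠ p.2 ∧ blk P s p.1 = blk P s p.2 ∧
    blk P s (l.1 * p.1 + l.2) = blk P s (l.1 * p.2 + l.2)}

/-- Along a line of nonzero slope both block indices are monotone, so their sum or difference
identifies the cell and takes at most `2 * (#P / s) + 1` values. -/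
lemma le_card_closePairs (P : Finset ℝ) (s k : ℕ) (l : ℝ × ℝ) (hl : l.1 ≠ 0)
    (hk : 2 * (2 * (#P / s) + 1) ≤ k) (hN : k ≤ #(onLine P l)) : k ≤ #(closePairs P s l) := by
  set S := onLine P l with hS
  set q := #P / s with hq
  let g : ℝ → ℕ := fun x => blk P s (l.1 * x + l.2)
  have hgq : ∀ x, g x ≤ q := fun x => blk_le _ _ _
  have hbq : ∀ x, blk P s x ≤ q := fun x => blk_le _ _ _
  obtain ⟨f, hf, hff⟩ : ∃ f : ℝ → ℕ, (∀ x, f x < 2 * q + 1) ∧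
      ∀ x y, f x = f y → blk P s x = blk P s y ∧ g x = g y := by
    rcases lt_or_gt_of_ne hl with h | h
    · refine ⟨fun x => blk P s x + (q - g x), fun x => ?_, fun x y hxy => ?_⟩
      · have := hbq x
        grind
      · have hx := hgq x
        have hy := hgq y
        rcases le_total x y with hle | hle
        · have h1 := blk_mono P s hle
          have h2 : g y ≤ g x := blk_mono P s (by nlinarith)
          grind
        · have h1 := blk_mono P s hle
          have h2 : g x ≤ g y := blk_mono P s (by nlinarith)
          grind
    · refine ⟨fun x => blk P s x + g x, fun x => ?_, fun x y hxy => ?_⟩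
      · have := hbq x
        have := hgq x
        grind
      · rcases le_total x y with hle | hle
        · have h1 := blk_mono P s hle
          have h2 : g x ≤ g y := blk_mono P s (by nlinarith)
          grind
        · have h1 := blk_mono P s hle
          have h2 : g y ≤ g x := blk_mono P s (by nlinarith)
          grind
  have h1 := sq_card_le_card_coincidences S f (2 * q + 1) fun x _ => hf x
  have h2 : #{p ∈ S ×ˢ S | f p.1 = f p.2} ≤ #S + #(closePairs P s l) := by
    have : ({p ∈ S ×ˢ S | f p.1 = f p.2} : Finset (ℝ × ℝ)) ⊆
        S.image (fun x => (x, x)) ∪ closePairs P s l := by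
      rintro ⟨x, y⟩ hp
      simp only [mem_filter, mem_product] at hp
      simp only [mem_union, mem_image, closePairs, mem_filter, mem_product]
      by_cases hxy : x = y
      · left
        exact ⟨x, hp.1.1, by rw [hxy]⟩
      · right
        exact ⟨hp.1, hxy, hff x y hp.2⟩
    refine (card_le_card this).trans ((card_union_le _ _).trans ?_)
    gcongr
    exact card_image_le
  by_contra! hlt
  have h3 := Nat.mul_le_mul_left (2 * q + 1) h2
  nlinarith

/-- The double count behind the Szemerédi–Trotter bound, for a general block length `s`. -/
lemma card_rich_mul_le (P : Finset ℝ) (s k : ℕ) (hs : 0 < s) (L : Finset (ℝ × ℝ))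
    (hk : 2 * (2 * (#P / s) + 1) ≤ k) (hL : ∀ l ∈ L, l.1 ≠ 0 ∧ k ≤ #(onLine P l)) :
    #L * k ≤ (#P * s) ^ 2 := by
  calc #L * k ≤ ∑ l ∈ L, #(closePairs P s l) := by
        rw [← smul_eq_mul]
        exact card_nsmul_le_sum _ _ _ fun l hl =>
          le_card_closePairs P s k l (hL l hl).1 hk (hL l hl).2
    _ = #(L.sigma fun l => closePairs P s l) := (card_sigma _ _).symm
    _ ≤ #(blkPairs P s ×ˢ blkPairs P s) := by
        refine card_le_card_of_injOn
          (fun t => (t.2, (t.1.1 * t.2.1 + t.1.2, t.1.1 * t.2.2 + t.1.2))) ?_ ?_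
        · rintro ⟨⟨m, c⟩, ⟨x, y⟩⟩ ht
          simp only [coe_sigma, Set.mem_sigma_iff, mem_coe, closePairs, mem_filter, mem_product,
            onLine] at ht
          simp only [coe_product, Set.mem_prod, mem_coe, blkPairs, mem_filter, mem_product]
          tauto
        · rintro ⟨⟨m, c⟩, ⟨x, y⟩⟩ ht ⟨⟨m', c'⟩, ⟨x', y'⟩⟩ _ h
          simp only [coe_sigma, Set.mem_sigma_iff, mem_coe, closePairs, mem_filter] at ht
          simp only [Prod.mk.injEq] at h
          obtain ⟨⟨rfl, rfl⟩, h1, h2⟩ := h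
          have hxy : x - y ≠ 0 := sub_ne_zero.2 ht.2.2.1
          have hm : m = m' := mul_right_cancel₀ hxy (by linarith)
          subst hm
          have hc : c = c' := by linarith
          subst hc
          rfl
    _ ≤ (#P * s) ^ 2 := by
        rw [card_product, sq]
        exact Nat.mul_le_mul (card_blkPairs_le P hs) (card_blkPairs_le P hs)

/-- The Szemerédi–Trotter bound for `k`-rich lines of the grid `P × P`. -/
lemma card_rich_lines (P : Finset ℝ) (k : ℕ) (hkP : k ≤ #P) (L : Finset (ℝ × ℝ))
    (hL : ∀ l ∈ L, l.1 ≠ 0 ∧ 2 ≤ #(onLine P l) ∧ k ≤ #(onLine P l)) :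
    #L * k ^ 3 ≤ 81 * #P ^ 4 := by
  set M := #P with hM
  rcases lt_or_ge k 4 with hk | hk
  · -- A single block suffices: the bound is that two points determine a line.
    rcases Nat.eq_zero_or_pos M with h0 | h0
    · have : k = 0 := by omega
      simp [this]
    have h := card_rich_mul_le P (M + 1) 2 (by omega) L
      (by rw [← hM, Nat.div_eq_of_lt (Nat.lt_succ_self M)]) fun l hl => ⟨(hL l hl).1, (hL l hl).2.1⟩
    rw [← hM] at h
    have h1 : k ^ 3 ≤ 27 := by interval_cases k <;> norm_num
    have h2 : (M * (M + 1)) ^ 2 ≤ (M * (2 * M)) ^ 2 := by gcongr; omega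
    have h3 : #L * k ^ 3 ≤ #L * 27 := by gcongr
    nlinarith
  · set s := 8 * M / k + 1 with hs
    have hs0 : 0 < s := Nat.succ_pos _
    have hks : k * s ≤ 9 * M := by
      have := Nat.mul_div_le (8 * M) k
      rw [hs, mul_add]
      omega
    have hks' : 8 * M ≤ k * s := (Nat.lt_mul_div_succ (8 * M) (by omega)).le
    have hq : 8 * (M / s) ≤ k := by
      have h1 := Nat.div_mul_le_self M s
      by_contra! hlt
      have h2 : k * s < 8 * (M / s) * s := Nat.mul_lt_mul_of_pos_right hlt hs0
      nlinarith
    have h := card_rich_mul_le P s k hs0 L (by rw [← hM]; omega)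
      fun l hl => ⟨(hL l hl).1, (hL l hl).2.2⟩
    rw [← hM] at h
    calc #L * k ^ 3 = #L * k * k ^ 2 := by ring
      _ ≤ (M * s) ^ 2 * k ^ 2 := by gcongr
      _ = (M * (k * s)) ^ 2 := by ring
      _ ≤ (M * (9 * M)) ^ 2 := by gcongr
      _ = 81 * M ^ 4 := by ring

/-! ### The sum of cubes of line richness -/

lemma cube_le_sum (N : ℕ) : (N : ℝ) ^ 3 ≤ 3 * ∑ k ∈ Finset.Icc 1 N, (k : ℝ) ^ 2 := by
  induction N with
  | zero => simp
  | succ n ih =>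
    rw [Finset.sum_Icc_succ_top (by omega)]
    push_cast
    have : (0 : ℝ) ≤ n := n.cast_nonneg
    nlinarith

lemma sum_cubes_le (P : Finset ℝ) (L : Finset (ℝ × ℝ))
    (hL : ∀ l ∈ L, l.1 ≠ 0 ∧ 2 ≤ #(onLine P l)) :
    ∑ l ∈ L, (#(onLine P l) : ℝ) ^ 3 ≤ 243 * (#P : ℝ) ^ 4 * (1 + Real.log #P) := by
  have hNP : ∀ l, #(onLine P l) ≤ #P := fun l => card_filter_le _ _
  calc ∑ l ∈ L, (#(onLine P l) : ℝ) ^ 3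
      ≤ ∑ l ∈ L, 3 * ∑ k ∈ Finset.Icc 1 #P, if k ≤ #(onLine P l) then (k : ℝ) ^ 2 else 0 := by
        refine sum_le_sum fun l _ => (cube_le_sum _).trans_eq ?_
        rw [← sum_filter]
        congr 2
        ext k
        have := hNP l
        simp only [mem_filter, Finset.mem_Icc]
        omega
    _ = 3 * ∑ k ∈ Finset.Icc 1 #P, ∑ l ∈ L, if k ≤ #(onLine P l) then (k : ℝ) ^ 2 else 0 := by
        rw [← mul_sum, sum_comm]
    _ ≤ 3 * ∑ k ∈ Finset.Icc 1 #P, 81 * (#P : ℝ) ^ 4 * (k : ℝ)⁻¹ := by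
        gcongr with k hk
        rw [Finset.mem_Icc] at hk
        rw [← sum_filter, sum_const, nsmul_eq_mul]
        have h := card_rich_lines P k hk.2 {l ∈ L | k ≤ #(onLine P l)} fun l hl => by
          rw [mem_filter] at hl
          exact ⟨(hL l hl.1).1, (hL l hl.1).2, hl.2⟩
        have hk0 : (0 : ℝ) < k := by exact_mod_cast hk.1
        rw [← div_eq_mul_inv, le_div_iff₀ hk0]
        have h' : (#{l ∈ L | k ≤ #(onLine P l)} : ℝ) * (k : ℝ) ^ 3 ≤ 81 * (#P : ℝ) ^ 4 := by
          exact_mod_cast h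
        linarith
    _ = 243 * (#P : ℝ) ^ 4 * ((harmonic #P : ℚ) : ℝ) := by
        rw [← mul_sum, harmonic_eq_sum_Icc]
        push_cast
        ring
    _ ≤ _ := by
        gcongr
        exact harmonic_le_one_add_log _

/-! ### Energies and collinear triples -/

/-- Solutions of `u * v = u' * v'` with `u, u' ∈ aA + 1` and `v, v' ∈ a'A + 1` nonzero inject into
triples of points on a common line of the grid. With `b = -1/a`, `b' = -1/a'`, the line joins
`(b, b')` to `(x, w)`, where `u = a * x + 1` and `v' = a' * w + 1`; it has slope
`v' * a / (a' * u)`. -/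
lemma sum_mulEnergy_le (A : Finset ℝ) (hA : (0 : ℝ) ∉ A) :
    ∃ L : Finset (ℝ × ℝ),
      (∀ l ∈ L, l.1 ≠ 0 ∧ 2 ≤ #(onLine (A ∪ A.image fun a => -1 / a) l)) ∧
      ∑ p ∈ A ×ˢ A, mulEnergy ((pshift p.1 A).erase 0) ((pshift p.2 A).erase 0) ≤
        ∑ l ∈ L, #(onLine (A ∪ A.image fun a => -1 / a) l) ^ 3 := by
  set P := A ∪ A.image fun a => -1 / a with hP
  let T : Finset (Σ _ : ℝ × ℝ, (ℝ × ℝ) × ℝ × ℝ) := (A ×ˢ A).sigma fun p =>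
    {x ∈ (((pshift p.1 A).erase 0 ×ˢ (pshift p.1 A).erase 0) ×ˢ
      (pshift p.2 A).erase 0 ×ˢ (pshift p.2 A).erase 0) | x.1.1 * x.2.1 = x.1.2 * x.2.2}
  let line : (Σ _ : ℝ × ℝ, (ℝ × ℝ) × ℝ × ℝ) → ℝ × ℝ := fun t =>
    (t.2.2.2 * t.1.1 / (t.1.2 * t.2.1.1), (t.2.2.2 - t.2.1.1) / (t.1.2 * t.2.1.1))
  let pts : (Σ _ : ℝ × ℝ, (ℝ × ℝ) × ℝ × ℝ) → ℝ × ℝ × ℝ := fun t =>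
    ((t.2.1.1 - 1) / t.1.1, (t.2.1.2 - 1) / t.1.1, -1 / t.1.1)
  have hmem : ∀ {a u : ℝ}, a ∈ A → u ∈ pshift a A → (u - 1) / a ∈ P := by
    intro a u ha hu
    have ha0 : a ≠ 0 := fun h => hA (h ▸ ha)
    obtain ⟨x, hx, rfl⟩ := mem_image.1 hu
    rw [add_sub_cancel_right, mul_div_cancel_left₀ _ ha0]
    exact mem_union_left _ hx
  have hinv : ∀ {a : ℝ}, a ∈ A → -1 / a ∈ P := fun ha =>
    mem_union_right _ (mem_image_of_mem _ ha)
  have key : ∀ t ∈ T, (t.1.1 ≠ 0 ∧ t.1.2 ≠ 0 ∧ t.2.1.1 ≠ 0 ∧ t.2.2.2 ≠ 0) ∧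
      (pts t).1 ∈ onLine P (line t) ∧ (pts t).2.1 ∈ onLine P (line t) ∧
      (pts t).2.2 ∈ onLine P (line t) ∧
      (line t).1 * (pts t).1 + (line t).2 = (t.2.2.2 - 1) / t.1.2 ∧
      (line t).1 * (pts t).2.1 + (line t).2 = (t.2.2.1 - 1) / t.1.2 ∧
      (line t).1 * (pts t).2.2 + (line t).2 = -1 / t.1.2 := by
    rintro ⟨⟨a, a'⟩, ⟨u, u'⟩, ⟨v, v'⟩⟩ ht
    simp only [T, mem_sigma, mem_filter, mem_product, mem_erase] at ht
    obtain ⟨⟨ha, ha'⟩, ⟨⟨⟨hu0, hu⟩, hu0', hu'⟩, ⟨hv0, hv⟩, hv0', hv'⟩, he⟩ := ht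
    have ha0 : a ≠ 0 := fun h => hA (h ▸ ha)
    have ha0' : a' ≠ 0 := fun h => hA (h ▸ ha')
    have e1 : v' * a / (a' * u) * ((u - 1) / a) + (v' - u) / (a' * u) = (v' - 1) / a' := by
      field_simp
      ring
    have e2 : v' * a / (a' * u) * ((u' - 1) / a) + (v' - u) / (a' * u) = (v - 1) / a' := by
      field_simp
      linarith
    have e3 : v' * a / (a' * u) * (-1 / a) + (v' - u) / (a' * u) = -1 / a' := by
      field_simp
      ring
    refine ⟨⟨ha0, ha0', hu0, hv0'⟩, ?_, ?_, ?_, e1, e2, e3⟩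
    · exact mem_filter.2 ⟨hmem ha hu, by
        simp only [line, pts]
        rw [e1]
        exact hmem ha' hv'⟩
    · exact mem_filter.2 ⟨hmem ha hu', by
        simp only [line, pts]
        rw [e2]
        exact hmem ha' hv⟩
    · exact mem_filter.2 ⟨hinv ha, by
        simp only [line, pts]
        rw [e3]
        exact hinv ha'⟩
  refine ⟨T.image line, ?_, ?_⟩
  · intro l hl
    obtain ⟨t, ht, rfl⟩ := mem_image.1 hl
    obtain ⟨⟨ha0, ha0', hu0, hv0⟩, h1, -, h3, -⟩ := key t ht
    refine ⟨div_ne_zero (mul_ne_zero hv0 ha0) (mul_ne_zero ha0' hu0), ?_⟩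
    refine one_lt_card.2 ⟨_, h1, _, h3, fun h => hu0 ?_⟩
    simp only [pts] at h
    field_simp at h
    linarith
  · calc ∑ p ∈ A ×ˢ A, mulEnergy ((pshift p.1 A).erase 0) ((pshift p.2 A).erase 0) = #T :=
          (card_sigma _ _).symm
      _ ≤ #((T.image line).sigma fun l => onLine P l ×ˢ onLine P l ×ˢ onLine P l) := by
          refine card_le_card_of_injOn (fun t => ⟨line t, pts t⟩) ?_ ?_
          · intro t ht
            have ht' : t ∈ T := ht
            obtain ⟨-, h1, h2, h3, -⟩ := key t ht'
            simp only [coe_sigma, Set.mem_sigma_iff, mem_coe, mem_product]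
            exact ⟨mem_image_of_mem _ ht', h1, h2, h3⟩
          · intro t ht t' ht' h
            obtain ⟨⟨ha0, ha0', -, -⟩, -, -, -, e1, e2, e3⟩ := key t ht
            obtain ⟨⟨hb0, hb0', -, -⟩, -, -, -, f1, f2, f3⟩ := key t' ht'
            simp only [Sigma.mk.injEq, heq_eq_eq] at h
            obtain ⟨hl, hp⟩ := h
            rw [hl, hp] at e1 e2 e3
            have g1 := e1.symm.trans f1
            have g2 := e2.symm.trans f2
            have g3 := e3.symm.trans f3
            clear e1 e2 e3 f1 f2 f3 hl ht ht'
            obtain ⟨⟨a, a'⟩, ⟨u, u'⟩, ⟨v, v'⟩⟩ := t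
            obtain ⟨⟨b, b'⟩, ⟨y, y'⟩, ⟨z, z'⟩⟩ := t'
            simp only [pts, Prod.mk.injEq] at hp g1 g2 g3 ha0 ha0' hb0 hb0'
            obtain ⟨p1, p2, p3⟩ := hp
            have hab : a = b := by
              field_simp at p3
              linarith
            have hab' : a' = b' := by
              field_simp at g3
              linarith
            subst hab hab'
            rw [div_left_inj' ha0, sub_left_inj] at p1 p2
            rw [div_left_inj' ha0', sub_left_inj] at g1 g2
            subst p1 p2 g1 g2
            rfl
      _ = ∑ l ∈ T.image line, #(onLine P l) ^ 3 := by
          rw [card_sigma]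
          refine sum_congr rfl fun l _ => ?_
          rw [card_product, card_product]
          ring

/-! ### The product set -/

lemma card_pshift {a : ℝ} (ha : a ≠ 0) (A : Finset ℝ) : #(pshift a A) = #A :=
  card_image_of_injective _ fun x y h => by
    simpa [ha] using h

theorem product_of_two_shifted_dilates :
    ∃ c : ℝ, 0 < c ∧
      ∀ A : Finset ℝ, (0 : ℝ) ∉ A → 2 ≤ A.card →
        ∃ a ∈ A, ∃ a' ∈ A,
          c * (A.card : ℝ) ^ 2 / Real.log A.card ≤
            ((pshift a A * pshift a' A).card : ℝ) := by
  refine ⟨1 / 250000, by norm_num, fun A hA h2 => ?_⟩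
  by_contra! hcon
  obtain ⟨L, hL, hsum⟩ := sum_mulEnergy_le A hA
  have hcub := sum_cubes_le _ L hL
  set P := A ∪ A.image fun a => -1 / a with hP
  set n := #A with hn
  have hn2 : (2 : ℝ) ≤ n := by exact_mod_cast h2
  have hPn : (#P : ℝ) ≤ 2 * n := by
    have h1 : #P ≤ #A + #(A.image fun a => -1 / a) := card_union_le _ _
    have h3 : #(A.image fun a => -1 / a) ≤ #A := card_image_le
    have : #P ≤ 2 * n := by omega
    exact_mod_cast this
  have hP0 : (0 : ℝ) < #P := by
    have : #A ≤ #P := card_le_card subset_union_left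
    have : 0 < #P := by omega
    exact_mod_cast this
  have hlog2 : Real.log 2 ≤ Real.log n := Real.log_le_log (by norm_num) hn2
  have hl2 := Real.log_two_gt_d9
  have hlogP : 1 + Real.log #P ≤ 4 * Real.log n := by
    have h1 : Real.log #P ≤ Real.log (2 * n) := Real.log_le_log hP0 hPn
    rw [Real.log_mul (by norm_num) (by linarith)] at h1
    linarith
  have hlogn : 0 < Real.log n := by linarith
  set E : ℝ × ℝ → ℕ := fun p =>
    mulEnergy ((pshift p.1 A).erase 0) ((pshift p.2 A).erase 0) with hE
  have hupper : ∑ p ∈ A ×ˢ A, (E p : ℝ) ≤ 15552 * (n : ℝ) ^ 4 * Real.log n := by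
    calc ∑ p ∈ A ×ˢ A, (E p : ℝ) ≤ ∑ l ∈ L, (#(onLine P l) : ℝ) ^ 3 := by exact_mod_cast hsum
      _ ≤ 243 * (#P : ℝ) ^ 4 * (1 + Real.log #P) := hcub
      _ ≤ 243 * (#P : ℝ) ^ 4 * (4 * Real.log n) := by gcongr
      _ ≤ 243 * (2 * n : ℝ) ^ 4 * (4 * Real.log n) := by gcongr
      _ = 15552 * (n : ℝ) ^ 4 * Real.log n := by ring
  have hlower : ∀ p ∈ A ×ˢ A, 15625 * (n : ℝ) ^ 2 * Real.log n ≤ E p := by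
    rintro ⟨a, a'⟩ hp
    obtain ⟨ha, ha'⟩ := mem_product.1 hp
    have hs := hcon a ha a' ha'
    simp only at ha ha'
    have hcard : ∀ b ∈ A, (n : ℝ) / 2 ≤ #((pshift b A).erase 0) := by
      intro b hb
      have h1 := pred_card_le_card_erase (s := pshift b A) (a := 0)
      rw [card_pshift (fun h => hA (h ▸ hb))] at h1
      have h3 : n ≤ 2 * #((pshift b A).erase 0) := by omega
      have h4 : (n : ℝ) ≤ 2 * #((pshift b A).erase 0) := by exact_mod_cast h3
      linarith
    have hCS := le_card_mul_mul_mulEnergy ((pshift a A).erase 0) ((pshift a' A).erase 0)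
    have hsub : #((pshift a A).erase 0 * (pshift a' A).erase 0) ≤ #(pshift a A * pshift a' A) :=
      card_le_card (mul_subset_mul (erase_subset _ _) (erase_subset _ _))
    have hCS' : ((#((pshift a A).erase 0) : ℝ)) ^ 2 * (#((pshift a' A).erase 0) : ℝ) ^ 2 ≤
        #(pshift a A * pshift a' A) * E (a, a') := by
      exact_mod_cast hCS.trans (Nat.mul_le_mul_right _ hsub)
    have h5 : ((n : ℝ) / 2) ^ 2 * ((n : ℝ) / 2) ^ 2 ≤
        1 / 250000 * (n : ℝ) ^ 2 / Real.log n * E (a, a') := by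
      refine le_trans ?_ (hCS'.trans (mul_le_mul_of_nonneg_right hs.le (Nat.cast_nonneg _)))
      have := hcard a ha
      have := hcard a' ha'
      gcongr
    rw [div_mul_eq_mul_div, le_div_iff₀ hlogn] at h5
    have h6 : (0 : ℝ) < (n : ℝ) ^ 2 := by positivity
    refine le_of_mul_le_mul_left ?_ h6
    linarith
  have hlow := card_nsmul_le_sum _ _ _ hlower
  rw [card_product, nsmul_eq_mul, ← hn] at hlow
  push_cast at hlow
  have h7 : 0 < (n : ℝ) ^ 4 * Real.log n := by positivity
  nlinarith
end
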